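/- Let 𝔤 be a semisimple complex Lie algebra with Cartan subalgebra 𝔞 and root system R. For α ∈ R, the centralizer in 𝔤 of the 𝔰𝔩₂-triple subalgebra spanned by H_α, 𝔤_α, and 𝔤_{−α} equals {u ∈ 𝔞 : α(u) = 0} ⊕ (⊕_{β ∈ {α}^⊥} 𝔤_β), where {α}^⊥ is the set of roots strongly orthogonal to α. -/

import Mathlib

open LieAlgebra

/-!
The centralizer of `𝔰𝔩₂(α)` is stable under the Cartan subalgebra, so it is the sum of its
intersections with the root spaces. An element `u` of the Cartan subalgebra acts on `L_{±α}` by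
`±α(u)`, so the zero root space contributes `ker α`. If `β` is a root and `α + β` is a weight, then
a nonzero `x ∈ L_β` is a multiple of `f ^ i v` with `i ≥ 1` and `v` the highest weight vector of the
`α`-string through `β`, and the `𝔰𝔩₂`-relations give `⁅e, x⁆ ≠ 0`; the same holds for `-α`. Hence
`L_β` meets the centralizer exactly when neither `α + β` nor `α - β` is a weight, in which case
`L_β` is contained in it.
-/

open LieModule LieAlgebra.IsKilling

section Annihilator

variable {R L M : Type*} [CommRing R] [LieRing L] [LieAlgebra R L]
  [AddCommGroup M] [Module R M] [LieRingModule L M] [LieModule R L M] {H : LieSubalgebra R L}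

/-- The annihilator in `L` of an `H`-submodule `N` of an `L`-module, as an `H`-submodule of `L`.
For `M = L` this is the centralizer of `N`. -/
def lieAnnihilator (N : LieSubmodule R H M) : LieSubmodule R H L where
  carrier := {x | ∀ y ∈ N, ⁅x, y⁆ = 0}
  add_mem' hx hz y hy := by rw [add_lie, hx y hy, hz y hy, add_zero]
  zero_mem' y _ := zero_lie y
  smul_mem' c x hx y hy := by rw [smul_lie, hx y hy, smul_zero]
  lie_mem {h x} hx y hy := by
    have hhy : ⁅(h : L), y⁆ ∈ N := N.lie_mem (x := h) hy
    rw [LieSubalgebra.coe_bracket_of_module, lie_lie, hx y hy, hx _ hhy, lie_zero, sub_zero]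

lemma mem_lieAnnihilator {N : LieSubmodule R H M} {x : L} :
    x ∈ lieAnnihilator N ↔ ∀ y ∈ N, ⁅x, y⁆ = 0 :=
  Iff.rfl

lemma rootSpace_le_lieAnnihilator_genWeightSpace [LieRing.IsNilpotent H] {χ ψ : H → R}
    (h : genWeightSpace M (χ + ψ) = ⊥) :
    rootSpace H χ ≤ lieAnnihilator (genWeightSpace M ψ) := by
  intro x hx y hy
  have hxy : ⁅x, y⁆ ∈ genWeightSpace M (χ + ψ) := lie_mem_genWeightSpace_of_mem_genWeightSpace hx hy
  rwa [h, LieSubmodule.mem_bot] at hxy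

lemma forall_mem_lieSpan_lie_eq_zero_iff {s : Set L} {x : L} :
    (∀ y ∈ LieSubalgebra.lieSpan R L s, ⁅x, y⁆ = 0) ↔ ∀ y ∈ s, ⁅x, y⁆ = 0 := by
  refine ⟨fun h y hy ↦ h y (LieSubalgebra.subset_lieSpan hy), fun h y hy ↦ ?_⟩
  induction hy using LieSubalgebra.lieSpan_induction with
  | mem y hy => exact h y hy
  | zero => exact lie_zero x
  | add u v _ _ hu hv => rw [lie_add, hu, hv, add_zero]
  | smul t u _ hu => rw [lie_smul, hu, smul_zero]
  | lie u v _ _ hu hv => rw [leibniz_lie, hu, hv, zero_lie, lie_zero, add_zero]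

/-- The centralizer of the subalgebra generated by the root spaces of `χ` and `-χ`, encoded as the
`H`-submodule of the elements of `L` commuting with both root spaces. -/
def rootSl2Centralizer [LieRing.IsNilpotent H] (χ : H → R) : LieSubmodule R H L :=
  lieAnnihilator (rootSpace H χ) ⊓ lieAnnihilator (rootSpace H (-χ))

lemma mem_rootSl2Centralizer [LieRing.IsNilpotent H] {χ : H → R} {x : L} :
    x ∈ rootSl2Centralizer χ ↔
      x ∈ lieAnnihilator (rootSpace H χ) ∧ x ∈ lieAnnihilator (rootSpace H (-χ)) :=
  Iff.rfl

lemma forall_mem_lieSpan_rootSpace_lie_eq_zero_iff [LieRing.IsNilpotent H] {χ : H → R} {x : L} :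
    (∀ y ∈ LieSubalgebra.lieSpan R L ((rootSpace H χ : Set L) ∪ (rootSpace H (-χ) : Set L)),
      ⁅x, y⁆ = 0) ↔ x ∈ rootSl2Centralizer χ := by
  simp only [forall_mem_lieSpan_lie_eq_zero_iff, Set.mem_union, SetLike.mem_coe, or_imp,
    forall_and, mem_rootSl2Centralizer, mem_lieAnnihilator]

/-- The set `{α}^⊥` of roots strongly orthogonal to `α`, a root being a nonzero linear form with
nonzero root space. -/
def stronglyOrthogonalRoots (H : LieSubalgebra R L) [LieRing.IsNilpotent H] (α : H →ₗ[R] R) :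
    Set (H →ₗ[R] R) :=
  {β | β ≠ 0 ∧ rootSpace H ⇑β ≠ ⊥ ∧
    α + β ≠ 0 ∧ rootSpace H ⇑(α + β) = ⊥ ∧ α - β ≠ 0 ∧ rootSpace H ⇑(α - β) = ⊥}

end Annihilator

lemma lie_e_pow_succ_toEnd_f_ne_zero {R L M : Type*} [CommRing R] [CharZero R] [IsDomain R]
    [LieRing L] [LieAlgebra R L] [AddCommGroup M] [Module R M] [Module.IsTorsionFree R M]
    [LieRingModule L M] [LieModule R L M] {h e f : L} {t : IsSl2Triple h e f} {m : M} {n i : ℕ}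
    (P : t.HasPrimitiveVectorWith m (n : R)) (hi : i < n) :
    ⁅e, (toEnd R L M f ^ (i + 1)) m⁆ ≠ 0 := by
  rw [P.lie_e_pow_succ_toEnd_f]
  have hni : (n : R) - i ≠ 0 := sub_ne_zero.2 (Nat.cast_injective.ne hi.ne')
  exact smul_ne_zero (mul_ne_zero (Nat.cast_add_one_ne_zero i) hni)
    (P.pow_toEnd_f_ne_zero_of_eq_nat rfl hi.le)

section Killing

variable {K L : Type*} [Field K] [LieRing L] [LieAlgebra K L] [FiniteDimensional K L]
  [LieAlgebra.IsKilling K L] {H : LieSubalgebra K L} [H.IsCartanSubalgebra]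
  [IsTriangularizable K H L]

lemma rootSpace_neg_eq_bot_iff {χ : H → K} : rootSpace H (-χ) = ⊥ ↔ rootSpace H χ = ⊥ := by
  have neg_ne_bot {ψ : H → K} (hψ : rootSpace H ψ ≠ ⊥) : rootSpace H (-ψ) ≠ ⊥ :=
    (-(⟨ψ, hψ⟩ : Weight K H L)).genWeightSpace_ne_bot
  exact not_iff_not.1 ⟨fun h ↦ neg_neg χ ▸ neg_ne_bot h, neg_ne_bot⟩

lemma mem_stronglyOrthogonalRoots_iff [Nontrivial L] {α β : H →ₗ[K] K} :
    β ∈ stronglyOrthogonalRoots H α ↔ β ≠ 0 ∧ rootSpace H β ≠ ⊥ ∧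
      rootSpace H (⇑α + ⇑β) = ⊥ ∧ rootSpace H (-⇑α + ⇑β) = ⊥ := by
  have ne_zero {γ : H →ₗ[K] K} (hγ : rootSpace H γ = ⊥) : γ ≠ 0 := by
    rintro rfl
    exact Weight.genWeightSpace_ne_bot L (0 : Weight K H L) hγ
  have hneg : -⇑α + ⇑β = -⇑(α - β) := by
    ext u
    simp only [Pi.add_apply, Pi.neg_apply, LinearMap.sub_apply, neg_sub, neg_add_eq_sub]
  rw [hneg, rootSpace_neg_eq_bot_iff]
  exact ⟨fun ⟨h0, h, _, hadd, _, hsub⟩ ↦ ⟨h0, h, hadd, hsub⟩,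
    fun ⟨h0, h, hadd, hsub⟩ ↦ ⟨h0, h, ne_zero hadd, hadd, ne_zero hsub, hsub⟩⟩

lemma rootSpace_le_rootSl2Centralizer [Nontrivial L] {α β : H →ₗ[K] K}
    (hβ : β ∈ stronglyOrthogonalRoots H α) : rootSpace H β ≤ rootSl2Centralizer α := by
  obtain ⟨-, -, hadd, hneg_add⟩ := mem_stronglyOrthogonalRoots_iff.1 hβ
  exact le_inf (rootSpace_le_lieAnnihilator_genWeightSpace (by rwa [add_comm]))
    (rootSpace_le_lieAnnihilator_genWeightSpace (by rwa [add_comm]))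

variable [CharZero K]

lemma exists_smul_eq_of_mem_rootSpace {α : Weight K H L} (hα : α.IsNonZero) {x y : L}
    (hx : x ∈ rootSpace H α) (hx0 : x ≠ 0) (hy : y ∈ rootSpace H α) : ∃ c : K, c • x = y := by
  have hx0' : (⟨x, hx⟩ : rootSpace H α) ≠ 0 := by simpa using hx0
  obtain ⟨c, hc⟩ :=
    (finrank_eq_one_iff_of_nonzero' _ hx0').1 (finrank_rootSpace_eq_one α hα) ⟨y, hy⟩
  exact ⟨c, congrArg Subtype.val hc⟩

lemma exists_hasPrimitiveVectorWith_chainLength {α : Weight K H L} (β : Weight K H L)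
    (hα : α.IsNonZero) {h e f : L} (t : IsSl2Triple h e f) (he : e ∈ rootSpace H α)
    (hf : f ∈ rootSpace H (-α)) :
    ∃ v ∈ rootSpace H (chainTop α β), t.HasPrimitiveVectorWith v (chainLength α β : K) := by
  obtain rfl := t.h_eq_coroot hα he hf
  obtain ⟨v, hv, hv0⟩ := (chainTop α β).exists_ne_zero
  have hev : ⁅e, v⁆ ∈ rootSpace H (α + chainTop α β) :=
    lie_mem_genWeightSpace_of_mem_genWeightSpace he hv
  rw [rootSpace, genWeightSpace_add_chainTop α β hα, LieSubmodule.mem_bot] at hev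
  exact ⟨v, hv, hv0, (chainLength_smul α β hv).symm, hev⟩

theorem lie_ne_zero_of_rootSpace_add_ne_bot {α β : Weight K H L} (hα : α.IsNonZero)
    (hβ : β.IsNonZero) (hαβ : rootSpace H (α + β) ≠ ⊥) {x y : L} (hx : x ∈ rootSpace H α)
    (hx0 : x ≠ 0) (hy : y ∈ rootSpace H β) (hy0 : y ≠ 0) : ⁅x, y⁆ ≠ 0 := by
  obtain ⟨h, e, f, t, he, hf⟩ := exists_isSl2Triple_of_weight_isNonZero hα
  obtain ⟨v, hv, P⟩ := exists_hasPrimitiveVectorWith_chainLength β hα t he hf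
  obtain ⟨i, hi⟩ : ∃ i, chainTopCoeff α β = i + 1 := by
    have := (rootSpace_zsmul_add_ne_bot_iff α β hα 1).1 (by rwa [one_smul])
    exact Nat.exists_eq_add_one.2 (by lia)
  have hi_lt : i < chainLength α β := by
    have := chainTopCoeff_le_chainLength α β
    lia
  have hfv : (toEnd K L L f ^ (i + 1)) v ∈ rootSpace H β := by
    have := toEnd_pow_apply_mem hf hv (i + 1)
    rwa [coe_chainTop', hi, ← add_assoc, smul_neg, neg_add_cancel, zero_add] at this
  obtain ⟨c, rfl⟩ := exists_smul_eq_of_mem_rootSpace hα he t.e_ne_zero hx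
  obtain ⟨d, rfl⟩ :=
    exists_smul_eq_of_mem_rootSpace hβ hfv (P.pow_toEnd_f_ne_zero_of_eq_nat rfl hi_lt) hy
  rw [smul_lie, lie_smul]
  exact smul_ne_zero (left_ne_zero_of_smul hx0)
    (smul_ne_zero (left_ne_zero_of_smul hy0) (lie_e_pow_succ_toEnd_f_ne_zero P hi_lt))

lemma rootSpace_add_eq_bot_of_mem_lieAnnihilator {α β : Weight K H L} (hα : α.IsNonZero)
    (hβ : β.IsNonZero) {y : L} (hy : y ∈ rootSpace H β) (hy0 : y ≠ 0)
    (hyα : y ∈ lieAnnihilator (rootSpace H α)) : rootSpace H (α + β) = ⊥ := by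
  by_contra hαβ
  obtain ⟨x, hx, hx0⟩ := α.exists_ne_zero
  refine lie_ne_zero_of_rootSpace_add_ne_bot hα hβ hαβ hx hx0 hy hy0 ?_
  rw [← lie_skew, hyα x hx, neg_zero]

lemma coe_mem_lieAnnihilator_rootSpace_iff {χ : H → K} (hχ : rootSpace H χ ≠ ⊥) {u : H} :
    (u : L) ∈ lieAnnihilator (rootSpace H χ) ↔ χ u = 0 := by
  have lie_eq {y : L} (hy : y ∈ rootSpace H χ) : ⁅(u : L), y⁆ = χ u • y :=
    lie_eq_smul_of_mem_rootSpace hy u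
  refine ⟨fun hu ↦ ?_, fun hu y hy ↦ by rw [lie_eq hy, hu, zero_smul]⟩
  obtain ⟨y, hy, hy0⟩ := (⟨χ, hχ⟩ : Weight K H L).exists_ne_zero
  exact (smul_eq_zero_iff_left hy0).1 ((lie_eq hy).symm.trans (hu y hy))

lemma coe_mem_rootSl2Centralizer_iff {χ : H → K} (hχ : rootSpace H χ ≠ ⊥) {u : H} :
    (u : L) ∈ rootSl2Centralizer χ ↔ χ u = 0 := by
  rw [mem_rootSl2Centralizer, coe_mem_lieAnnihilator_rootSpace_iff hχ,
    coe_mem_lieAnnihilator_rootSpace_iff (rootSpace_neg_eq_bot_iff.not.2 hχ), Pi.neg_apply,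
    neg_eq_zero, and_self]

lemma rootSl2Centralizer_inf_rootSpace_zero (α : H →ₗ[K] K) (hα : rootSpace H α ≠ ⊥) :
    (rootSl2Centralizer α ⊓ rootSpace H (0 : H → K)).toSubmodule =
      (LinearMap.ker α).map H.toSubmodule.subtype := by
  ext x
  rw [rootSpace_zero_eq]
  constructor
  · rintro ⟨hxC, hxH⟩
    exact ⟨⟨x, hxH⟩, (coe_mem_rootSl2Centralizer_iff hα).1 hxC, rfl⟩
  · rintro ⟨u, hu, rfl⟩
    exact ⟨(coe_mem_rootSl2Centralizer_iff hα).2 hu, u.2⟩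

lemma toLinear_mem_stronglyOrthogonalRoots [Nontrivial L] {α β : Weight K H L} (hα : α.IsNonZero)
    (hβ : β.IsNonZero) {y : L} (hy : y ∈ rootSpace H β) (hy0 : y ≠ 0)
    (hyα : y ∈ rootSl2Centralizer α) : β.toLinear ∈ stronglyOrthogonalRoots H α.toLinear := by
  obtain ⟨hα_ann, hneg_ann⟩ := mem_rootSl2Centralizer.1 hyα
  have hadd : rootSpace H (α + β) = ⊥ :=
    rootSpace_add_eq_bot_of_mem_lieAnnihilator hα hβ hy hy0 hα_ann
  have hneg_add : rootSpace H (⇑(-α) + ⇑β) = ⊥ :=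
    rootSpace_add_eq_bot_of_mem_lieAnnihilator hα.neg hβ hy hy0 hneg_ann
  rw [Weight.coe_neg] at hneg_add
  exact mem_stronglyOrthogonalRoots_iff.2
    ⟨Weight.coe_toLinear_ne_zero_iff.2 hβ, β.genWeightSpace_ne_bot, hadd, hneg_add⟩

theorem rootSl2Centralizer_eq (α : H →ₗ[K] K) (hα0 : α ≠ 0) (hα : rootSpace H α ≠ ⊥) :
    (rootSl2Centralizer α).toSubmodule =
      (LinearMap.ker α).map H.toSubmodule.subtype ⊔
        ⨆ β : stronglyOrthogonalRoots H α, (rootSpace H β.1).toSubmodule := by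
  let A : Weight K H L := ⟨α, hα⟩
  have hA : A.IsNonZero := Weight.coe_toLinear_ne_zero_iff.1 hα0
  obtain ⟨e, -, he0⟩ := A.exists_ne_zero
  have : Nontrivial L := nontrivial_of_ne e 0 he0
  rw [← rootSl2Centralizer_inf_rootSpace_zero α hα]
  refine le_antisymm ?_
    (sup_le inf_le_left (iSup_le fun β ↦ rootSpace_le_rootSl2Centralizer β.2))
  conv_lhs => rw [eq_iSup_inf_genWeightSpace K H L (rootSl2Centralizer α),
    LieSubmodule.iSup_toSubmodule]
  refine iSup_le fun β ↦ ?_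
  by_cases hβ : β.IsZero
  · rw [hβ.eq]
    exact le_sup_left
  · rintro y ⟨hyα, hyβ⟩
    obtain rfl | hy0 := eq_or_ne y 0
    · exact Submodule.zero_mem _
    have hβα := toLinear_mem_stronglyOrthogonalRoots hA hβ hyβ hy0 hyα
    exact Submodule.mem_sup_right (Submodule.mem_iSup_of_mem ⟨_, hβα⟩ hyβ)

end Killing

theorem centralizer_sl2_eq_general {K : Type*} [Field K] [CharZero K]
    (L : Type*) [LieRing L] [LieAlgebra K L] [FiniteDimensional K L] [LieAlgebra.IsKilling K L]
    (H : LieSubalgebra K L) [H.IsCartanSubalgebra] [IsTriangularizable K H L]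
    (α : H →ₗ[K] K) (hα0 : α ≠ 0) (hαroot : rootSpace H ⇑α ≠ ⊥) :
    {x : L | ∀ y ∈ LieSubalgebra.lieSpan K L
        ((rootSpace H ⇑α : Set L) ∪ (rootSpace H ⇑(-α) : Set L)), ⁅x, y⁆ = 0} =
      (Submodule.map H.toSubmodule.subtype (LinearMap.ker α) ⊔
        ⨆ β : stronglyOrthogonalRoots H α, (rootSpace H ⇑β.1).toSubmodule : Submodule K L) := by
  rw [← rootSl2Centralizer_eq α hα0 hαroot]
  ext x
  exact forall_mem_lieSpan_rootSpace_lie_eq_zero_iff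

/-- In a semisimple complex Lie algebra `L` with Cartan subalgebra `H`, the
centralizer of the `𝔰𝔩₂`-subalgebra spanned by `H_α`, `L_α` and `L_{−α}`
(the Lie subalgebra generated by the root spaces `L_α` and `L_{−α}`) is
`{u ∈ H : α(u) = 0} ⊕ (⊕_{β strongly orthogonal to α} L_β)`. -/
theorem centralizer_sl2_eq
    (L : Type*) [LieRing L] [LieAlgebra ℂ L] [FiniteDimensional ℂ L]
    [LieAlgebra.IsSemisimple ℂ L]
    (H : LieSubalgebra ℂ L) [H.IsCartanSubalgebra]
    (α : H →ₗ[ℂ] ℂ) (hα0 : α ≠ 0) (hαroot : rootSpace H ⇑α ≠ ⊥) :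
    {x : L | ∀ y ∈ LieSubalgebra.lieSpan ℂ L
        ((rootSpace H ⇑α : Set L) ∪ (rootSpace H ⇑(-α) : Set L)), ⁅x, y⁆ = 0} =
      (Submodule.map H.toSubmodule.subtype (LinearMap.ker α) ⊔
        ⨆ β : {β : H →ₗ[ℂ] ℂ //
          β ≠ 0 ∧ rootSpace H ⇑β ≠ ⊥ ∧
          -- `β` is strongly orthogonal to `α`:
          α + β ≠ 0 ∧ rootSpace H ⇑(α + β) = ⊥ ∧
          α - β ≠ 0 ∧ rootSpace H ⇑(α - β) = ⊥},
          (rootSpace H ⇑(β : H →ₗ[ℂ] ℂ)).toSubmodule : Submodule ℂ L) :=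
  centralizer_sl2_eq_general L H α hα0 hαroot
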